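/- For all words a, b, c, e ∈ M and all u, v, w ∈ M_1, the equality ā u b̄ v c̄ w ē = 0 holds in A_{3,d}, where x̄ = x − x^T. -/

import Mathlib

open FreeAlgebra MulOpposite

/-- The alphabet: `(k, false)` is the letter `x_{k+1}`, `(k, true)` is `x_{k+1}ᵀ`. -/
abbrev Ltr (d : ℕ) := Fin d × Bool

/-- The free (unital) associative algebra on the `2d` letters.  The free non-unital
algebra `M_F` sits inside it as the span of the nonempty words. -/
abbrev FA (F : Type) [Field F] (d : ℕ) := FreeAlgebra F (Ltr d)

variable (F : Type) [Field F] (d : ℕ)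

/-- The word in the free algebra corresponding to a list of letters
(the empty list gives `1`, the unit). -/
def wordOf (l : List (Ltr d)) : FA F d := (l.map (FreeAlgebra.ι F)).prod

/-- The transpose: the linear anti-automorphism with `x ↦ xᵀ`, `xᵀ ↦ x`. -/
def tp (a : FA F d) : FA F d :=
  ((FreeAlgebra.lift F fun p : Ltr d => op (FreeAlgebra.ι F (p.1, !p.2))) a).unop

/-- `ā = a - aᵀ`. -/
def bar (a : FA F d) : FA F d := a - tp F d a

/-- `T(a,b,c) = a b̄ c̄ + b̄ aᵀ c̄ + b̄ c̄ a`. -/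
def Trel (a b c : FA F d) : FA F d :=
  a * bar F d b * bar F d c + bar F d b * tp F d a * bar F d c + bar F d b * bar F d c * a

/-- The copy of the free non-unital algebra `M_F`, i.e. the span of the nonempty words. -/
def MFsub : Submodule F (FA F d) :=
  Submodule.span F {w | ∃ l : List (Ltr d), l ≠ [] ∧ w = wordOf F d l}

/-- The two-sided ideal such that `A_{3,d} = M_F / (idealA ∩ M_F)`: it is generated by
`a³` for `a ∈ M_F` together with `T(a,b,c)` for `a, b, c ∈ M_F`.  (Since all generators lie in
`M_F`, its intersection with `M_F` is exactly the two-sided ideal of the non-unital algebra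
`M_F` generated by these elements; in fact it is contained in `M_F`.)
An element `u ∈ M_F` is zero in `A_{3,d}` iff `u ∈ idealA F d`. -/
def idealA : TwoSidedIdeal (FA F d) :=
  TwoSidedIdeal.span
    ({x | ∃ a ∈ MFsub F d, x = a ^ 3} ∪
     {x | ∃ a ∈ MFsub F d, ∃ b ∈ MFsub F d, ∃ c ∈ MFsub F d, x = Trel F d a b c})

section Abs
variable {R : Type*} [Ring R] (S : R → Prop) (P : R → R → Prop)

theorem abs_rev (hT : ∀ q q' s t, P q q' → S s → S t → q * s * t + s * q' * t + s * t * q = 0)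
    (hS : ∀ s, S s → P s (-s)) (r s t : R) (hr : S r) (hs : S s) (ht : S t) :
    s * t * r = - (r * t * s) := by
  have h1 := hT r (-r) s t (hS r hr) hs ht
  have h2 := hT s (-s) r t (hS s hs) hr ht
  have h3 : s * t * r + r * t * s =
    (r * s * t + s * (-r) * t + s * t * r) + (s * r * t + r * (-s) * t + r * t * s) := by
    noncomm_ring
  rw [h1, h2, add_zero] at h3
  exact eq_neg_of_add_eq_zero_left h3

theorem abs_four (hT : ∀ q q' s t, P q q' → S s → S t → q * s * t + s * q' * t + s * t * q = 0)
    (hS : ∀ s, S s → P s (-s)) (hM : ∀ q q' r r', P q q' → P r r' → P (q * r) (r' * q'))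
    (a b c e : R) (ha : S a) (hb : S b) (hc : S c) (he : S e) :
    a * b * c * e = 0 := by
  have h1 := hT (c * e) (-e * -c) a b (hM _ _ _ _ (hS c hc) (hS e he)) ha hb
  have h2 := abs_rev S P hT hS c a e hc ha he
  have h3 : a * b * c * e = (c * e * a * b + a * (-e * -c) * b + a * b * (c * e))
      - (a * e * c + c * e * a) * b := by noncomm_ring
  rw [h3, h1, h2]
  simp

theorem abs_comm (hT : ∀ q q' s t, P q q' → S s → S t → q * s * t + s * q' * t + s * t * q = 0)
    (hsym : ∀ q q', P q q' → P q' q)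
    (a b c q q' : R) (ha : S a) (hb : S b) (hc : S c) (hq : P q q') :
    q * (a * b * c) = a * b * c * q' := by
  have h1 := hT q' q b c (hsym _ _ hq) hb hc
  have h2 := hT q q' a b hq ha hb
  have h3 : q * (a * b * c) - a * b * c * q' =
    (q * a * b + a * q' * b + a * b * q) * c - a * (q' * b * c + b * q * c + b * c * q') := by
    noncomm_ring
  rw [h1, h2] at h3
  simpa [sub_eq_zero] using h3

theorem abs_K2 (hT : ∀ q q' s t, P q q' → S s → S t → q * s * t + s * q' * t + s * t * q = 0)
    (hsym : ∀ q q', P q q' → P q' q)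
    (hS : ∀ s, S s → P s (-s)) (hM : ∀ q q' r r', P q q' → P r r' → P (q * r) (r' * q'))
    (a b c e q : R) (ha : S a) (hb : S b) (hc : S c) (he : S e) (hq : q = 1 ∨ ∃ q', P q q') :
    a * b * q * c * e = 0 := by
  have h4 := abs_four S P hT hS hM a b c e ha hb hc he
  rcases hq with rfl | ⟨q', hq⟩
  · simpa using h4
  · have h1 := hT q' q b c (hsym _ _ hq) hb hc
    have h2 := abs_comm S P hT hsym b c e q' q hb hc he (hsym _ _ hq)
    have h3 := abs_comm S P hT hsym a b c q q' ha hb hc hq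
    have h5 : a * b * q * c * e = a * (q' * b * c + b * q * c + b * c * q') * e
       - a * (q' * (b * c * e)) - (a * b * c * q') * e := by noncomm_ring
    rw [h5, h1, h2, ← h3]
    have h6 : a * 0 * e - a * (b * c * e * q) - q * (a * b * c) * e
      = - (a * b * c * e) * q - q * (a * b * c * e) := by noncomm_ring
    rw [h6, h4]; simp

theorem abs_N (hM : ∀ q q' r r', P q q' → P r r' → P (q * r) (r' * q')) (q r : R)
    (hq : q = 1 ∨ ∃ q', P q q') (hr : q = q → r = 1 ∨ ∃ r', P r r') :
    q * r = 1 ∨ ∃ q', P (q * r) q' := by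
  rcases hq with rfl | ⟨q', hq⟩
  · simpa using hr rfl
  · rcases hr rfl with rfl | ⟨r', hr⟩
    · right; exact ⟨q', by simpa using hq⟩
    · right; exact ⟨_, hM _ _ _ _ hq hr⟩

theorem abs_K3 (hT : ∀ q q' s t, P q q' → S s → S t → q * s * t + s * q' * t + s * t * q = 0)
    (hsym : ∀ q q', P q q' → P q' q)
    (hS : ∀ s, S s → P s (-s)) (hM : ∀ q q' r r', P q q' → P r r' → P (q * r) (r' * q'))
    (a b c e q w : R) (ha : S a) (hb : S b) (hc : S c) (he : S e) (hq : q = 1 ∨ ∃ q', P q q')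
    (hw : w = 1 ∨ ∃ w', P w w') :
    a * b * q * c * w * e = 0 := by
  have h4 := abs_K2 S P hT hsym hS hM a b c e q ha hb hc he hq
  rcases hw with rfl | ⟨w', hw⟩
  · simpa using h4
  · have h1 := hT w' w c e (hsym _ _ hw) hc he
    have h2 := abs_K2 S P hT hsym hS hM a b c e (q * w') ha hb hc he
      (abs_N P hM _ _ hq (fun _ => Or.inr ⟨w, hsym _ _ hw⟩))
    have h5 : a * b * q * c * w * e = a * b * q * (w' * c * e + c * w * e + c * e * w')
       - a * b * (q * w') * c * e - a * b * q * c * e * w' := by noncomm_ring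
    rw [h5, h1, h2, h4]; simp

theorem abs_K4 (hT : ∀ q q' s t, P q q' → S s → S t → q * s * t + s * q' * t + s * t * q = 0)
    (hsym : ∀ q q', P q q' → P q' q)
    (hS : ∀ s, S s → P s (-s)) (hM : ∀ q q' r r', P q q' → P r r' → P (q * r) (r' * q'))
    (a b c e u q w : R) (ha : S a) (hb : S b) (hc : S c) (he : S e) (hq : q = 1 ∨ ∃ q', P q q')
    (hw : w = 1 ∨ ∃ w', P w w') (hu : u = 1 ∨ ∃ u', P u u') :
    a * u * b * q * c * w * e = 0 := by
  have h4 := abs_K3 S P hT hsym hS hM a b c e q w ha hb hc he hq hw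
  rcases hu with rfl | ⟨u', hu⟩
  · simpa using h4
  · have h1 := hT u' u a b (hsym _ _ hu) ha hb
    have h2 := abs_K3 S P hT hsym hS hM a b c e (u' * q) w ha hb hc he
      (abs_N P hM _ _ (Or.inr ⟨u, hsym _ _ hu⟩) (fun _ => hq)) hw
    have h5 : a * u * b * q * c * w * e
       = (u' * a * b + a * u * b + a * b * u') * q * c * w * e
       - u' * (a * b * q * c * w * e) - a * b * (u' * q) * c * w * e := by noncomm_ring
    rw [h5, h1, h2, h4]; simp

end Abs

theorem tp_mul (a b : FA F d) : tp F d (a * b) = tp F d b * tp F d a := by simp [tp]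
theorem tp_sub (a b : FA F d) : tp F d (a - b) = tp F d a - tp F d b := by simp [tp]
theorem tp_add (a b : FA F d) : tp F d (a + b) = tp F d a + tp F d b := by simp [tp]
theorem tp_smul (r : F) (b : FA F d) : tp F d (r • b) = r • tp F d b := by simp [tp]
theorem tp_one : tp F d 1 = 1 := by simp [tp]
theorem tp_zero : tp F d 0 = 0 := by simp [tp]
theorem tp_ι (p : Ltr d) : tp F d (FreeAlgebra.ι F p) = FreeAlgebra.ι F (p.1, !p.2) := by
  simp [tp]

theorem wordOf_append (l m : List (Ltr d)) :
    wordOf F d (l ++ m) = wordOf F d l * wordOf F d m := by simp [wordOf]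

theorem tp_wordOf (l : List (Ltr d)) :
    tp F d (wordOf F d l) = wordOf F d (l.reverse.map fun p => (p.1, !p.2)) := by
  induction l with
  | nil => simp [wordOf, tp_one]
  | cons x l ih =>
    have : wordOf F d (x :: l) = FreeAlgebra.ι F x * wordOf F d l := by simp [wordOf]
    rw [this, tp_mul, ih, tp_ι, List.reverse_cons, List.map_append, wordOf_append]
    simp [wordOf]

theorem word_mem (l : List (Ltr d)) (h : l ≠ []) : wordOf F d l ∈ MFsub F d :=
  Submodule.subset_span ⟨l, h, rfl⟩

theorem tp_mem (a : FA F d) (h : a ∈ MFsub F d) : tp F d a ∈ MFsub F d := by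
  unfold MFsub at h
  induction h using Submodule.span_induction with
  | mem x hx =>
    obtain ⟨l, hl, rfl⟩ := hx
    rw [tp_wordOf]; exact word_mem F d _ (by simpa using hl)
  | zero => rw [tp_zero]; exact Submodule.zero_mem _
  | add x y _ _ hx hy => rw [tp_add]; exact Submodule.add_mem _ hx hy
  | smul r x _ hx => rw [tp_smul]; exact Submodule.smul_mem _ _ hx

theorem tp_tp (a : FA F d) (h : a ∈ MFsub F d) : tp F d (tp F d a) = a := by
  unfold MFsub at h
  induction h using Submodule.span_induction with
  | mem x hx =>
    obtain ⟨l, hl, rfl⟩ := hx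
    rw [tp_wordOf, tp_wordOf]; simp [List.map_reverse, Function.comp_def]
  | zero => rw [tp_zero, tp_zero]
  | add x y _ _ hx hy => rw [tp_add, tp_add, hx, hy]
  | smul r x _ hx => rw [tp_smul, tp_smul, hx]

theorem mul_memMF (a b : FA F d) (ha : a ∈ MFsub F d) (hb : b ∈ MFsub F d) :
    a * b ∈ MFsub F d := by
  have h := Submodule.mul_mem_mul ha hb
  unfold MFsub at h ⊢
  rw [Submodule.span_mul_span] at h
  refine Submodule.span_mono ?_ h
  rintro _ ⟨_, ⟨l, hl, rfl⟩, _, ⟨m, hm, rfl⟩, rfl⟩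
  exact ⟨l ++ m, by simp [hl], (wordOf_append F d l m).symm⟩

theorem bar_mem (a : FA F d) (h : a ∈ MFsub F d) : bar F d a ∈ MFsub F d :=
  Submodule.sub_mem _ h (tp_mem F d a h)

/-- `ā u b̄ v c̄ w ē = 0` in `A_{3,d}` for all words `a, b, c, e ∈ M` and all
`u, v, w ∈ M₁`. -/
theorem stmt10 (F : Type) [Field F] [Infinite F] (h2 : ringChar F ≠ 2) (d : ℕ)
    (a b c e : List (Ltr d)) (ha : a ≠ []) (hb : b ≠ []) (hc : c ≠ []) (he : e ≠ [])
    (u v w : List (Ltr d)) :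
    bar F d (wordOf F d a) * wordOf F d u * bar F d (wordOf F d b) * wordOf F d v *
      bar F d (wordOf F d c) * wordOf F d w * bar F d (wordOf F d e) ∈ idealA F d := by
  let π := (idealA F d).ringCon.mk'
  have hπ : ∀ x, x ∈ idealA F d ↔ π x = 0 := by
    intro x
    rw [TwoSidedIdeal.mem_iff, ← map_zero π]
    exact (RingCon.eq _).symm
  rw [hπ]
  simp only [map_mul]
  have hw : ∀ l : List (Ltr d), π (wordOf F d l) = 1 ∨
      ∃ q', ∃ x ∈ MFsub F d, π (wordOf F d l) = π x ∧ q' = π (tp F d x) := by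
    intro l
    by_cases hl : l = []
    · left; subst hl; simp [wordOf]
    · right; exact ⟨_, _, word_mem F d l hl, rfl, rfl⟩
  refine abs_K4 (fun s => ∃ x ∈ MFsub F d, s = π (bar F d x))
    (fun q q' => ∃ x ∈ MFsub F d, q = π x ∧ q' = π (tp F d x)) ?_ ?_ ?_ ?_ _ _ _ _ _ _ _
    ⟨_, word_mem F d a ha, rfl⟩ ⟨_, word_mem F d b hb, rfl⟩ ⟨_, word_mem F d c hc, rfl⟩
    ⟨_, word_mem F d e he, rfl⟩ (hw v) (hw w) (hw u)
  · rintro _ _ _ _ ⟨x, hx, rfl, rfl⟩ ⟨y, hy, rfl⟩ ⟨z, hz, rfl⟩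
    have : Trel F d x y z ∈ idealA F d :=
      TwoSidedIdeal.subset_span (Or.inr ⟨x, hx, y, hy, z, hz, rfl⟩)
    rw [hπ] at this
    simpa [Trel] using this
  · rintro _ _ ⟨x, hx, rfl, rfl⟩
    exact ⟨_, tp_mem F d x hx, rfl, by rw [tp_tp F d x hx]⟩
  · rintro _ ⟨x, hx, rfl⟩
    refine ⟨_, bar_mem F d x hx, rfl, ?_⟩
    rw [← map_neg]
    simp only [bar]
    rw [tp_sub, tp_tp F d x hx, neg_sub]
  · rintro _ _ _ _ ⟨x, hx, rfl, rfl⟩ ⟨y, hy, rfl, rfl⟩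
    exact ⟨_, mul_memMF F d x y hx hy, by rw [map_mul], by rw [tp_mul, map_mul]⟩
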